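/- Let G be a finitely presented group with finite generating set X. There exists a function α: ℕ → ℕ ∪ {0} such that f_{G,X}(k,m,n) ∼ α(n)/m (the right-hand side regarded as an element of 𝓕 independent of k) if and only if G is hyperbolic. -/

import Mathlib

open Function

namespace IsoSpecPaper

variable {ι : Type*} {G : Type*} [Group G]

/-- The (reduced) length of an element of a free group. -/
noncomputable def wnorm (w : FreeGroup ι) : ℕ :=
  @FreeGroup.norm ι (Classical.decEq ι) w

/-- `triv φ k` : the set of words of length at most `k` in the generators
(and their inverses) representing the identity of `G` under the marking `φ`. -/
noncomputable def triv (φ : FreeGroup ι →* G) (k : ℕ) : Set (FreeGroup ι) :=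
  {w | wnorm w ≤ k ∧ φ w = 1}

/-- `AreaLe R w l` : `w` is a product of `l` conjugates of elements of `R` or
their inverses in the free group. -/
def AreaLe (R : Set (FreeGroup ι)) (w : FreeGroup ι) (l : ℕ) : Prop :=
  ∃ L : List (FreeGroup ι × FreeGroup ι), L.length = l ∧
    (∀ p ∈ L, p.2 ∈ R ∨ p.2⁻¹ ∈ R) ∧
    w = (L.map fun p => p.1⁻¹ * p.2 * p.1).prod

/-- The area of `w` with respect to the set of relators `R`. -/
noncomputable def area (R : Set (FreeGroup ι)) (w : FreeGroup ι) : ℕ :=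
  sInf {l | AreaLe R w l}

/-- The isoperimetric spectrum of the marked group `(G, φ)`:
`isoSpec φ k m n = max { area_{S_m}(w) : w ∈ ⟪S_k⟫, ‖w‖ ≤ n }`. -/
noncomputable def isoSpec (φ : FreeGroup ι →* G) (k m n : ℕ) : ℕ :=
  sSup (area (triv φ m) '' {w | w ∈ Subgroup.normalClosure (triv φ k) ∧ wnorm w ≤ n})

/-- The real-valued isoperimetric spectrum. -/
noncomputable def isoSpecR (φ : FreeGroup ι →* G) : ℕ → ℕ → ℕ → ℝ :=
  fun k m n => (isoSpec φ k m n : ℝ)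

/-- The Dehn function of the presentation with relators `R`. -/
noncomputable def dehn (R : Set (FreeGroup ι)) (n : ℕ) : ℕ :=
  sSup (area R '' {w | w ∈ Subgroup.normalClosure R ∧ wnorm w ≤ n})

/-- The quasi-order `f ≼ g` on functions of triples `(k,m,n)` of positive integers
with `m ≥ k`. -/
def SpecLE (f g : ℕ → ℕ → ℕ → ℝ) : Prop :=
  ∃ C : ℕ, 0 < C ∧ ∀ k m n : ℕ, 0 < k → 0 < m → 0 < n → C * k ≤ m →
    f k (C * m) n ≤ C * g (C * k) m (C * n) + C * (n : ℝ) / m + C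

/-- Equivalence of isoperimetric functions: `f ∼ g`. -/
def SpecEquiv (f g : ℕ → ℕ → ℕ → ℝ) : Prop := SpecLE f g ∧ SpecLE g f

/-- The linear spectrum `(k,m,n) ↦ n/m`. -/
noncomputable def linSpec : ℕ → ℕ → ℕ → ℝ := fun _ m n => (n : ℝ) / m

/-- The word length of `g ∈ G` with respect to the marking `φ`. -/
noncomputable def wlen (φ : FreeGroup ι →* G) (g : G) : ℕ :=
  sInf {n | ∃ w : FreeGroup ι, wnorm w = n ∧ φ w = g}

/-- The word metric on `G` with respect to the marking `φ`. -/
noncomputable def wdist (φ : FreeGroup ι →* G) (g h : G) : ℕ := wlen φ (g⁻¹ * h)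

/-- Quasi-isometry of marked groups with respect to their word metrics. -/
noncomputable def QuasiIsometric {H : Type*} [Group H] {κ : Type*}
    (φ : FreeGroup ι →* G) (ψ : FreeGroup κ →* H) : Prop :=
  ∃ L : ℝ, 0 ≤ L ∧ ∃ (α : G → H) (β : H → G),
    (∀ x y : G, (wdist ψ (α x) (α y) : ℝ) ≤ L * wdist φ x y + L) ∧
    (∀ u v : H, (wdist φ (β u) (β v) : ℝ) ≤ L * wdist ψ u v + L) ∧
    (∀ t : H, (wdist ψ (α (β t)) t : ℝ) ≤ L) ∧
    (∀ s : G, (wdist φ (β (α s)) s : ℝ) ≤ L)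

/-- A (combinatorial) geodesic path of length `n` in the Cayley graph of `(G, φ)`:
consecutive vertices are at distance at most `1` and the endpoints are at
distance exactly `n`. -/
noncomputable def IsGeodesic (φ : FreeGroup ι →* G) {n : ℕ} (p : Fin (n + 1) → G) : Prop :=
  (∀ i : Fin n, wdist φ (p i.castSucc) (p i.succ) ≤ 1) ∧
  wdist φ (p 0) (p (Fin.last n)) = n

/-- Every vertex of the path `p` lies within distance `δ` of the set `A`. -/
noncomputable def ThinAt (φ : FreeGroup ι →* G) (δ : ℝ) {n : ℕ}
    (p : Fin (n + 1) → G) (A : Set G) : Prop :=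
  ∀ i, ∃ a ∈ A, (wdist φ (p i) a : ℝ) ≤ δ

/-- The Cayley graph of `(G, φ)` is `δ`-hyperbolic: every geodesic triangle is `δ`-thin. -/
noncomputable def HypConst (φ : FreeGroup ι →* G) (δ : ℝ) : Prop :=
  ∀ (n₁ n₂ n₃ : ℕ) (p : Fin (n₁ + 1) → G) (q : Fin (n₂ + 1) → G) (r : Fin (n₃ + 1) → G),
    IsGeodesic φ p → IsGeodesic φ q → IsGeodesic φ r →
    p (Fin.last n₁) = q 0 → q (Fin.last n₂) = r 0 → r (Fin.last n₃) = p 0 →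
    ThinAt φ δ p (Set.range q ∪ Set.range r) ∧
    ThinAt φ δ q (Set.range r ∪ Set.range p) ∧
    ThinAt φ δ r (Set.range p ∪ Set.range q)

/-- The marked group `(G, φ)` is hyperbolic. -/
noncomputable def IsHyperbolic (φ : FreeGroup ι →* G) : Prop :=
  ∃ δ : ℝ, 0 ≤ δ ∧ HypConst φ δ

/-- `G` (marked by `φ`) is a limit (direct limit) of hyperbolic groups. -/
noncomputable def LimitOfHyperbolic (φ : FreeGroup ι →* G) : Prop :=
  Surjective φ ∧ ∃ R : ℕ → Set (FreeGroup ι),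
    (∀ i j, i ≤ j → R i ⊆ R j) ∧
    φ.ker = Subgroup.normalClosure (⋃ i, R i) ∧
    ∀ i, IsHyperbolic (QuotientGroup.mk' (Subgroup.normalClosure (R i)))

/-- `G` (marked by `φ`) is well-approximated by hyperbolic groups. -/
noncomputable def WellApproximated (φ : FreeGroup ι →* G) : Prop :=
  Surjective φ ∧ ∃ R : ℕ → Set (FreeGroup ι),
    (∀ i j, i ≤ j → R i ⊆ R j) ∧
    φ.ker = Subgroup.normalClosure (⋃ i, R i) ∧
    (∀ i, IsHyperbolic (QuotientGroup.mk' (Subgroup.normalClosure (R i)))) ∧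
    ∃ C : ℕ, 0 < C ∧ ∀ i : ℕ, 0 < i →
      (∀ w : FreeGroup ι, wnorm w ≤ i → φ w = 1 →
        w ∈ Subgroup.normalClosure (R i)) ∧
      HypConst (QuotientGroup.mk' (Subgroup.normalClosure (R i))) ((C * i : ℕ) : ℝ)

/-!
If `G` is hyperbolic, its word metric satisfies Gromov's four-point inequality. As soon as `m`
exceeds the four-point constant, a loop of length at least `6m` then has a subword of length at most
`6m` that can be shortened by more than `m`, so that Dehn's algorithm with relators of length `12m`
fills a loop of length `n` with area at most `n/m + 1`. The error term of `≼` absorbs this bound;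
even `α = 0` works.

Conversely, suppose that the spectrum is equivalent to `α(n)/m`. Words of length at most `m` have
area at most `1` with respect to the relators of length at most `m`, and comparing the two functions
at `m ≍ n` shows that `α` grows at most linearly. Comparing them again at a fixed large `m` gives a
linear isoperimetric inequality. Stokes' theorem turns it into a quadratic lower bound for detours:
let `z` lie on a geodesic from `x` to `y`, let `u` be the cone over the `r`-ball around `z` and `v`
the distance to `x`. The one-form `u dv` integrates to `r²` along the geodesic and to `0` along a
path avoiding the ball, while its integral along a loop is bounded by the area of the loop. Such a
bound forces `3`-quasi-geodesics to follow geodesics, and dropping a perpendicular onto one side of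
a triangle exhibits it as a union of two L-shaped quasi-geodesics, so that triangles are thin.
-/

section Paths

variable {V : Type*} {d : V → V → ℕ} {p q : ℕ → V} {m n : ℕ} {x y z : V}

/-- A discrete path of length `n` from `x` to `y` for the integral distance `d`. Paths are functions
on `ℕ` of which only the values on `[0, n]` matter; steps of length `0` are allowed. -/
structure IsPath (d : V → V → ℕ) (p : ℕ → V) (n : ℕ) (x y : V) : Prop where
  source : p 0 = x
  target : p n = y
  step : ∀ i < n, d (p i) (p (i + 1)) ≤ 1

/-- A discrete geodesic of length `n` from `x` to `y`. The condition `d (p i) (p j) = j - i` is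
stated additively to avoid truncated subtraction. -/
structure IsGeodesicPath (d : V → V → ℕ) (p : ℕ → V) (n : ℕ) (x y : V) : Prop where
  source : p 0 = x
  target : p n = y
  dist_add : ∀ ⦃i j⦄, i ≤ j → j ≤ n → d (p i) (p j) + i = j

/-- An integral pseudometric in which any two points are joined by a path realising their
distance; the model is the vertex set of a connected graph. -/
structure IsGeodesicMetric (d : V → V → ℕ) : Prop where
  self : ∀ x, d x x = 0
  comm : ∀ x y, d x y = d y x
  triangle : ∀ x y z, d x z ≤ d x y + d y z
  exists_path : ∀ x y, ∃ p, IsPath d p (d x y) x y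

/-- Concatenation of a path of length `m` with a second path. -/
def appendPath (p : ℕ → V) (m : ℕ) (q : ℕ → V) : ℕ → V :=
  fun i => if i ≤ m then p i else q (i - m)

lemma appendPath_of_le {i : ℕ} (hi : i ≤ m) : appendPath p m q i = p i :=
  if_pos hi

lemma appendPath_add (hpq : p m = q 0) (j : ℕ) : appendPath p m q (m + j) = q j := by
  rcases Nat.eq_zero_or_pos j with rfl | hj
  · rw [Nat.add_zero, appendPath_of_le le_rfl, hpq]
  · rw [appendPath, if_neg (by omega), Nat.add_sub_cancel_left]

namespace IsPath

lemma append (hp : IsPath d p m x y) (hq : IsPath d q n y z) :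
    IsPath d (appendPath p m q) (m + n) x z := by
  have hpq : p m = q 0 := hp.target.trans hq.source.symm
  refine ⟨(appendPath_of_le m.zero_le).trans hp.source, (appendPath_add hpq n).trans hq.target,
    fun i hi => ?_⟩
  rcases Nat.lt_or_ge i m with him | him
  · rw [appendPath_of_le him.le, appendPath_of_le him]
    exact hp.step i him
  · obtain ⟨j, rfl⟩ := Nat.exists_eq_add_of_le him
    rw [Nat.add_assoc, appendPath_add hpq, appendPath_add hpq]
    exact hq.step j (by omega)

lemma subpath (hp : IsPath d p n x y) {i j : ℕ} (hij : i ≤ j) (hj : j ≤ n) :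
    IsPath d (fun t => p (i + t)) (j - i) (p i) (p j) where
  source := rfl
  target := by rw [Nat.add_sub_cancel' hij]
  step t ht := hp.step (i + t) (by omega)

lemma reverse (hd : IsGeodesicMetric d) (hp : IsPath d p n x y) :
    IsPath d (fun i => p (n - i)) n y x where
  source := hp.target
  target := by rw [Nat.sub_self, hp.source]
  step i hi := by
    have hstep := hp.step (n - (i + 1)) (by omega)
    rwa [hd.comm, show n - (i + 1) + 1 = n - i by omega] at hstep

lemma dist_add_le (hd : IsGeodesicMetric d) (hp : IsPath d p n x y) {i j : ℕ} (hij : i ≤ j)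
    (hj : j ≤ n) : d (p i) (p j) + i ≤ j := by
  induction j, hij using Nat.le_induction with
  | base => rw [hd.self, zero_add]
  | succ j _ ih =>
    have := ih (by omega)
    have := hp.step j (by omega)
    have := hd.triangle (p i) (p j) (p (j + 1))
    omega

lemma dist_le (hd : IsGeodesicMetric d) (hp : IsPath d p n x y) : d x y ≤ n := by
  simpa only [hp.source, hp.target, add_zero] using hp.dist_add_le hd n.zero_le le_rfl

lemma isGeodesicPath (hd : IsGeodesicMetric d) (hp : IsPath d p n x y) (hn : n ≤ d x y) :
    IsGeodesicPath d p n x y where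
  source := hp.source
  target := hp.target
  dist_add i j hij hj := by
    have h0i := hp.dist_add_le hd i.zero_le (hij.trans hj)
    have hij' := hp.dist_add_le hd hij hj
    have hjn := hp.dist_add_le hd hj le_rfl
    have hi := hd.triangle (p 0) (p i) (p n)
    have hj := hd.triangle (p i) (p j) (p n)
    rw [hp.source] at h0i hi
    rw [hp.target] at hjn hi hj
    omega

end IsPath

lemma IsGeodesicMetric.exists_geodesicPath (hd : IsGeodesicMetric d) (x y : V) :
    ∃ p, IsGeodesicPath d p (d x y) x y :=
  (hd.exists_path x y).imp fun _ hp => hp.isGeodesicPath hd le_rfl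

namespace IsGeodesicPath

lemma isPath (hp : IsGeodesicPath d p n x y) : IsPath d p n x y where
  source := hp.source
  target := hp.target
  step i hi := by
    have := hp.dist_add (i.le_add_right 1) hi
    omega

lemma dist_source (hp : IsGeodesicPath d p n x y) {i : ℕ} (hi : i ≤ n) : d x (p i) = i := by
  simpa only [hp.source, add_zero] using hp.dist_add i.zero_le hi

lemma dist_target_add (hp : IsGeodesicPath d p n x y) {i : ℕ} (hi : i ≤ n) :
    d (p i) y + i = n := by
  simpa only [hp.target] using hp.dist_add hi le_rfl

lemma dist_eq (hp : IsGeodesicPath d p n x y) : d x y = n := by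
  simpa only [hp.target] using hp.dist_source le_rfl

lemma take (hp : IsGeodesicPath d p n x y) {i : ℕ} (hi : i ≤ n) :
    IsGeodesicPath d p i x (p i) where
  source := hp.source
  target := rfl
  dist_add _ _ hjk hk := hp.dist_add hjk (hk.trans hi)

lemma drop (hp : IsGeodesicPath d p n x y) {i : ℕ} (hi : i ≤ n) :
    IsGeodesicPath d (fun t => p (i + t)) (n - i) (p i) y where
  source := rfl
  target := by rw [Nat.add_sub_cancel' hi, hp.target]
  dist_add j k hjk hk := by
    have := hp.dist_add (Nat.add_le_add_left hjk i) (by omega)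
    omega

lemma reverse (hd : IsGeodesicMetric d) (hp : IsGeodesicPath d p n x y) :
    IsGeodesicPath d (fun i => p (n - i)) n y x :=
  (hp.isPath.reverse hd).isGeodesicPath hd (by rw [hd.comm, hp.dist_eq])

end IsGeodesicPath

end Paths

section FourPoint

variable {V : Type*} {d : V → V → ℕ} {p : ℕ → V} {n δ E m : ℕ} {x y : V}

/-- Geodesic triangles are `δ`-thin. Only the first side is mentioned, since the vertices may be
permuted cyclically. -/
def ThinTriangles (d : V → V → ℕ) (δ : ℕ) : Prop :=
  ∀ ⦃p q r : ℕ → V⦄ ⦃l m n : ℕ⦄ ⦃x y z : V⦄,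
    IsGeodesicPath d p l x y → IsGeodesicPath d q m y z → IsGeodesicPath d r n z x →
    ∀ i ≤ l, (∃ j ≤ m, d (p i) (q j) ≤ δ) ∨ ∃ j ≤ n, d (p i) (r j) ≤ δ

/-- Gromov's four-point condition: of the three ways to pair up four points, the two with the
largest distance sums have sums differing by at most `E`. -/
def FourPoint (d : V → V → ℕ) (E : ℕ) : Prop :=
  ∀ x y z w, d x z + d y w ≤ max (d x y + d z w) (d y z + d x w) + E

lemma exists_adjacent_of_forall_or {A B : ℕ → Prop} {n : ℕ} (hA : A 0) (hB : B n)
    (hAB : ∀ i ≤ n, A i ∨ B i) : ∃ i j, i ≤ j ∧ j ≤ i + 1 ∧ j ≤ n ∧ A i ∧ B j := by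
  induction n with
  | zero => exact ⟨0, 0, le_rfl, Nat.zero_le _, le_rfl, hA, hB⟩
  | succ n ih =>
    rcases hAB n n.le_succ with hn | hn
    · exact ⟨n, n + 1, n.le_succ, le_rfl, le_rfl, hn, hB⟩
    · obtain ⟨i, j, hij, hji, hj, h⟩ := ih hn fun i hi => hAB i (hi.trans n.le_succ)
      exact ⟨i, j, hij, hji, hj.trans n.le_succ, h⟩

-- Up to the error `2δ + 1`, the distance from `w` to `p` is the Gromov product `(x|y)_w`.
lemma ThinTriangles.exists_near (hd : IsGeodesicMetric d) (hδ : ThinTriangles d δ)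
    (hp : IsGeodesicPath d p n x y) (w : V) :
    ∃ i ≤ n, 2 * d w (p i) + n ≤ d w x + d w y + 4 * δ + 2 := by
  obtain ⟨q, hq⟩ := hd.exists_geodesicPath y w
  obtain ⟨r, hr⟩ := hd.exists_geodesicPath w x
  obtain ⟨i, i', hii', hi'i, hi', ⟨j, hj, hij⟩, ⟨k, hk, hik⟩⟩ :=
    exists_adjacent_of_forall_or
      (A := fun i => ∃ j ≤ d w x, d (p i) (r j) ≤ δ) (B := fun i => ∃ j ≤ d y w, d (p i) (q j) ≤ δ)
      ⟨d w x, le_rfl, by rw [hp.source, hr.target, hd.self]; exact δ.zero_le⟩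
      ⟨0, Nat.zero_le _, by rw [hp.target, hq.source, hd.self]; exact δ.zero_le⟩
      fun i hi => (hδ hp hq hr i hi).symm
  refine ⟨i, hii'.trans hi', ?_⟩
  have hwi : d w (p i) ≤ j + δ := by
    linarith [hd.triangle w (r j) (p i), hr.dist_source hj, hd.comm (r j) (p i)]
  have hwi' : d w (p i) + k ≤ d w y + δ + 1 := by
    linarith [hd.triangle w (q k) (p i), hd.triangle (q k) (p i') (p i), hq.dist_target_add hk,
      hp.dist_add hii' hi', hd.comm (q k) w, hd.comm (q k) (p i'), hd.comm (p i') (p i),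
      hd.comm w y]
  have hix : i + j ≤ d w x + δ := by
    linarith [hd.triangle x (r j) (p i), hp.dist_source (hii'.trans hi'), hr.dist_target_add hj,
      hd.comm (r j) (p i), hd.comm (r j) x]
  have hi'y : n ≤ i' + k + δ := by
    linarith [hd.triangle (p i') (q k) y, hp.dist_target_add hi', hq.dist_source hk,
      hd.comm (q k) y]
  omega

lemma ThinTriangles.fourPoint (hd : IsGeodesicMetric d) (hδ : ThinTriangles d δ) :
    FourPoint d (6 * δ + 2) := by
  intro x y z w
  obtain ⟨p, hp⟩ := hd.exists_geodesicPath x z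
  obtain ⟨q, hq⟩ := hd.exists_geodesicPath z y
  obtain ⟨r, hr⟩ := hd.exists_geodesicPath y x
  obtain ⟨i, hi, hwi⟩ := hδ.exists_near hd hp w
  have hcomm := hd.comm w
  have detour : ∀ a b v, d a v + d v b = d a b → d (p i) v ≤ δ →
      d w a + d w b ≤ d a b + 2 * (d w (p i) + δ) := by
    intro a b v hv hiv
    have hwv := hd.triangle w (p i) v
    have ha := hd.triangle w v a
    have hb := hd.triangle w v b
    have hva := hd.comm v a
    omega
  rcases hδ hp hq hr i hi with ⟨j, hj, hij⟩ | ⟨j, hj, hij⟩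
  · have := detour z y (q j) (by rw [hq.dist_source hj, add_comm, hq.dist_target_add hj]) hij
    have := hd.comm z y
    have := hcomm x; have := hcomm y; have := hcomm z
    omega
  · have := detour y x (r j) (by rw [hr.dist_source hj, add_comm, hr.dist_target_add hj]) hij
    have := hd.comm x y
    have := hcomm x; have := hcomm y; have := hcomm z
    omega

lemma FourPoint.add_le_dist_succ_of_straight (hd : IsGeodesicMetric d) (hE : FourPoint d E)
    (hm : 0 < m) (hEm : E ≤ m) {x : ℕ → V} {N : ℕ}
    (hupper : ∀ i < N, d (x i) (x (i + 1)) ≤ 3 * m)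
    (hlower : ∀ i < N, 2 * m ≤ d (x i) (x (i + 1)))
    (htwo : ∀ i, i + 2 ≤ N → 5 * m ≤ d (x i) (x (i + 2))) :
    ∀ i < N, d (x 0) (x i) + m ≤ d (x 0) (x (i + 1)) := by
  intro i hi
  induction i with
  | zero =>
    have := hlower 0 hi
    rw [hd.self]
    omega
  | succ i ih =>
    have hprev := ih (by omega)
    have hstep := hupper i (by omega)
    have hstep' := hupper (i + 1) hi
    have hjump := htwo i hi
    have hfour := hE (x i) (x 0) (x (i + 2)) (x (i + 1))
    rw [hd.comm (x i) (x 0), hd.comm (x (i + 2)) (x (i + 1))] at hfour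
    simp only [add_assoc, Nat.reduceAdd] at hstep' ⊢
    omega

lemma FourPoint.le_dist_of_straight (hd : IsGeodesicMetric d) (hE : FourPoint d E)
    (hm : 0 < m) (hEm : E ≤ m) {x : ℕ → V} {N : ℕ} (hN : 2 ≤ N)
    (hupper : ∀ i < N, d (x i) (x (i + 1)) ≤ 3 * m)
    (hlower : ∀ i < N, 2 * m ≤ d (x i) (x (i + 1)))
    (htwo : ∀ i, i + 2 ≤ N → 5 * m ≤ d (x i) (x (i + 2))) : 5 * m ≤ d (x 0) (x N) := by
  have hfar : ∀ i, 2 ≤ i → i ≤ N → 5 * m ≤ d (x 0) (x i) := by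
    intro i hi
    induction i, hi using Nat.le_induction with
    | base => exact htwo 0
    | succ i _ ih =>
      intro hi
      have := hE.add_le_dist_succ_of_straight hd hm hEm hupper hlower htwo i hi
      have := ih (by omega)
      omega
  exact hfar N hN le_rfl

lemma FourPoint.exists_shortcut (hd : IsGeodesicMetric d) (hE : FourPoint d E) (hm : 0 < m)
    (hEm : E ≤ m) (hp : IsPath d p n x x) (hn : 6 * m ≤ n) :
    ∃ i j, i ≤ j ∧ j ≤ n ∧ j ≤ i + 6 * m ∧ d (p i) (p j) + m + i < j := by
  by_contra! hlocal
  set N := n / (3 * m)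
  have hN : 2 ≤ N := (Nat.le_div_iff_mul_le (by omega)).2 (by omega)
  have hNn : 3 * m * N ≤ n := Nat.mul_div_le n (3 * m)
  have hnN : n < 3 * m * N + 3 * m := Nat.lt_mul_div_succ n (by omega)
  have hindex : ∀ {i}, i ≤ N → 3 * m * i ≤ n := fun hi => (Nat.mul_le_mul_left _ hi).trans hNn
  have hfar := hE.le_dist_of_straight hd hm hEm (x := fun i => p (3 * m * i)) hN
    (fun i hi => by
      have := hp.dist_add_le hd (Nat.mul_le_mul_left (3 * m) i.le_succ) (hindex hi)
      linarith)
    (fun i hi => by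
      have := hlocal _ _ (Nat.mul_le_mul_left (3 * m) i.le_succ) (hindex hi) (by linarith)
      linarith)
    (fun i hi => by
      have := hlocal _ _ (Nat.mul_le_mul_left (3 * m) (i.le_add_right 2)) (hindex hi) (by linarith)
      linarith)
  have hback := hp.dist_add_le hd hNn le_rfl
  rw [hp.target, hd.comm] at hback
  simp only [mul_zero, hp.source] at hfar
  omega

end FourPoint

section Detour

variable {V : Type*} {d : V → V → ℕ} {p h g σ τ : ℕ → V} {i j k m n r K D N : ℕ}
  {x y z w f : V}

/-- The points `x` and `y` are joined by a path of length `n` that stays outside the open ball of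
radius `r` around `z`. -/
def JoinedAvoiding (d : V → V → ℕ) (z : V) (r : ℕ) (x y : V) (n : ℕ) : Prop :=
  ∃ p, IsPath d p n x y ∧ ∀ i ≤ n, r ≤ d z (p i)

/-- Avoiding the ball of radius `r` around a point `z` between `x` and `y` costs length at least
quadratic in `r`. -/
def DetourInequality (d : V → V → ℕ) (K : ℕ) : Prop :=
  ∀ ⦃x y z : V⦄ ⦃r n : ℕ⦄, d x z + d z y = d x y → JoinedAvoiding d z r x y n →
    r * r ≤ K * (n + 1)

/-- A discrete path along which length is at most three times distance. -/
structure IsQuasiGeodesicPath (d : V → V → ℕ) (p : ℕ → V) (n : ℕ) (x y : V) : Prop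
    extends IsPath d p n x y where
  le_dist : ∀ ⦃i j⦄, i ≤ j → j ≤ n → j ≤ 3 * d (p i) (p j) + i

namespace JoinedAvoiding

lemma dist_le (hd : IsGeodesicMetric d) (hxy : JoinedAvoiding d z r x y n) : d x y ≤ n :=
  let ⟨_, hp, _⟩ := hxy
  hp.dist_le hd

lemma symm (hd : IsGeodesicMetric d) (hxy : JoinedAvoiding d z r x y n) :
    JoinedAvoiding d z r y x n :=
  let ⟨_, hp, hpz⟩ := hxy
  ⟨_, hp.reverse hd, fun i _ => hpz _ (n.sub_le i)⟩

lemma trans (hxy : JoinedAvoiding d z r x y m) (hyw : JoinedAvoiding d z r y w n) :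
    JoinedAvoiding d z r x w (m + n) := by
  obtain ⟨p, hp, hpz⟩ := hxy
  obtain ⟨q, hq, hqz⟩ := hyw
  refine ⟨_, hp.append hq, fun i hi => ?_⟩
  rcases le_total i m with him | him
  · rw [appendPath_of_le him]
    exact hpz i him
  · obtain ⟨j, rfl⟩ := Nat.exists_eq_add_of_le him
    rw [appendPath_add (hp.target.trans hq.source.symm)]
    exact hqz j (by omega)

end JoinedAvoiding

lemma IsGeodesicPath.exists_joinedAvoiding (hd : IsGeodesicMetric d)
    (hp : IsGeodesicPath d p n z y) {A : Set V} (hy : y ∈ A)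
    (hnear : ∀ i ≤ n, ∃ a ∈ A, d (p i) a ≤ D) (hfar : ∀ a ∈ A, D ≤ d z a) :
    ∃ i ≤ n, i ≤ 2 * D ∧ ∃ a ∈ A, ∃ m ≤ D, JoinedAvoiding d z D (p i) a m := by
  rcases le_total n (2 * D) with hn | hn
  · refine ⟨n, le_rfl, hn, y, hy, 0, D.zero_le, fun _ => y, ⟨hp.target.symm, rfl, ?_⟩, ?_⟩
    · exact fun _ h => absurd h (Nat.not_lt_zero _)
    · exact fun _ _ => hfar y hy
  · obtain ⟨a, ha, hpa⟩ := hnear _ hn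
    obtain ⟨c, hc⟩ := hd.exists_geodesicPath (p (2 * D)) a
    refine ⟨2 * D, hn, le_rfl, a, ha, _, hpa, c, hc.isPath, fun t ht => ?_⟩
    have hz := hp.dist_source hn
    have := hd.triangle z (c t) (p (2 * D))
    have := hc.dist_source ht
    have := hd.comm (c t) (p (2 * D))
    omega

namespace IsQuasiGeodesicPath

lemma exists_joinedAvoiding (hd : IsGeodesicMetric d) (hτ : IsQuasiGeodesicPath d τ n x y)
    (hfar : ∀ j ≤ n, r ≤ d z (τ j)) (hi : i ≤ n) (hj : j ≤ n) :
    ∃ m ≤ 3 * d (τ i) (τ j), JoinedAvoiding d z r (τ i) (τ j) m := by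
  have of_le : ∀ {i j}, i ≤ j → j ≤ n →
      ∃ m ≤ 3 * d (τ i) (τ j), JoinedAvoiding d z r (τ i) (τ j) m := by
    intro i j hij hj
    have := hτ.le_dist hij hj
    exact ⟨j - i, by omega, _, hτ.subpath hij hj, fun t _ => hfar _ (by omega)⟩
  rcases le_total i j with hij | hji
  · exact of_le hij hj
  · obtain ⟨m, hm, hjoin⟩ := of_le hji hi
    exact ⟨m, by rwa [hd.comm], hjoin.symm hd⟩

-- Leaving the geodesic within `2D` on either side of `σ k`, one finds a detour of length at most
-- `20D` along the quasi-geodesic that avoids the `D`-ball around `σ k`.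
lemma le_of_farthest (hd : IsGeodesicMetric d) (hK : DetourInequality d K)
    (hτ : IsQuasiGeodesicPath d τ n x y) (hσ : IsGeodesicPath d σ N x y) (hk : k ≤ N)
    (hnear : ∀ k ≤ N, ∃ j ≤ n, d (σ k) (τ j) ≤ D) (hfar : ∀ j ≤ n, D ≤ d (σ k) (τ j)) :
    D ≤ 21 * K := by
  have hnear' : ∀ k ≤ N, ∃ a ∈ τ '' Set.Iic n, d (σ k) a ≤ D := fun k hk =>
    Set.exists_mem_image.2 (hnear k hk)
  have hfar' : ∀ a ∈ τ '' Set.Iic n, D ≤ d (σ k) a := Set.forall_mem_image.2 hfar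
  obtain ⟨i, hi, hiD, _, ⟨j, hj, rfl⟩, m, hm, hjoin⟩ :=
    (hσ.drop hk).exists_joinedAvoiding hd (A := τ '' Set.Iic n) ⟨n, Set.self_mem_Iic, hτ.target⟩
      (fun i hi => hnear' _ (by omega)) hfar'
  obtain ⟨i', hi', hi'D, _, ⟨j', hj', rfl⟩, m', hm', hjoin'⟩ :=
    ((hσ.take hk).reverse hd).exists_joinedAvoiding hd (A := τ '' Set.Iic n)
      ⟨0, n.zero_le, hτ.source⟩ (fun i _ => hnear' _ ((k.sub_le i).trans hk)) hfar'
  obtain ⟨l, hl, hmiddle⟩ := hτ.exists_joinedAvoiding hd hfar hj' hj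
  have hki : k + i ≤ N := by omega
  have hleft := hσ.dist_add (k.sub_le i') hk
  have hright := hσ.dist_add (k.le_add_right i) hki
  have hboth := hσ.dist_add ((k.sub_le i').trans (k.le_add_right i)) hki
  have hquad := hK (by omega) ((hjoin'.trans hmiddle).trans (hjoin.symm hd))
  have hspread : d (σ (k - i')) (σ (k + i)) ≤ 4 * D := by omega
  have hl' : l ≤ 18 * D := by
    linarith [hd.triangle (τ j') (σ (k - i')) (τ j),
      hd.triangle (σ (k - i')) (σ (k + i)) (τ j), hjoin.dist_le hd, (hjoin'.symm hd).dist_le hd]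
  by_contra! hlt
  have : K * (m' + l + m + 1) ≤ K * (20 * D + 1) := Nat.mul_le_mul_left K (by omega)
  nlinarith [Nat.mul_le_mul_right D (Nat.succ_le_of_lt hlt)]

lemma exists_near_of_geodesic (hd : IsGeodesicMetric d) (hK : DetourInequality d K)
    (hτ : IsQuasiGeodesicPath d τ n x y) (hσ : IsGeodesicPath d σ N x y) :
    ∀ k ≤ N, ∃ j ≤ n, d (σ k) (τ j) ≤ 21 * K := by
  have nearest : ∀ v, ∃ j ≤ n, ∀ j' ≤ n, d v (τ j) ≤ d v (τ j') := fun v =>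
    Set.exists_min_image _ _ (Set.finite_Iic n) Set.nonempty_Iic
  choose f hf hfmin using nearest
  obtain ⟨k, hk : k ≤ N, hkmax⟩ := Set.exists_max_image (Set.Iic N)
    (fun k => d (σ k) (τ (f (σ k)))) (Set.finite_Iic N) Set.nonempty_Iic
  have hD := hτ.le_of_farthest hd hK hσ hk (fun k' hk' => ⟨_, hf _, hkmax k' hk'⟩) (hfmin _)
  exact fun k' hk' => ⟨_, hf _, (hkmax k' hk').trans hD⟩

lemma near_geodesic (hd : IsGeodesicMetric d) (hτ : IsQuasiGeodesicPath d τ n x y)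
    (hσ : IsGeodesicPath d σ N x y) (hnear : ∀ k ≤ N, ∃ j ≤ n, d (σ k) (τ j) ≤ D) :
    ∀ j ≤ n, ∃ k ≤ N, d (τ j) (σ k) ≤ 7 * D + 3 := by
  intro t ht
  obtain ⟨k, k', hkk', hk'k, hk', ⟨j, hjt, hj⟩, ⟨j', ⟨htj', hj'n⟩, hj'⟩⟩ :=
    exists_adjacent_of_forall_or (n := N)
      (A := fun k => ∃ j ≤ t, d (σ k) (τ j) ≤ D)
      (B := fun k => ∃ j, (t ≤ j ∧ j ≤ n) ∧ d (σ k) (τ j) ≤ D)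
      ⟨0, t.zero_le, by rw [hσ.source, hτ.source, hd.self]; exact D.zero_le⟩
      ⟨n, ⟨ht, le_rfl⟩, by rw [hσ.target, hτ.target, hd.self]; exact D.zero_le⟩
      fun k hk => by
        obtain ⟨j, hj, hkj⟩ := hnear k hk
        exact (le_total j t).imp (fun h => ⟨j, h, hkj⟩) fun h => ⟨j, ⟨h, hj⟩, hkj⟩
  refine ⟨k, hkk'.trans hk', ?_⟩
  linarith [hd.triangle (τ j) (σ k) (τ j'), hd.triangle (σ k) (σ k') (τ j'),
    hd.triangle (τ t) (τ j) (σ k), hd.comm (τ t) (τ j), hd.comm (σ k) (τ j),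
    hσ.dist_add hkk' hk', hτ.le_dist (hjt.trans htj') hj'n, hτ.dist_add_le hd hjt ht]

lemma of_nearest (hd : IsGeodesicMetric d) (hh : IsGeodesicPath d h m x f)
    (hg : IsGeodesicPath d g n f y) (hnear : ∀ i ≤ m, n ≤ d (h i) y) :
    IsQuasiGeodesicPath d (appendPath h m g) (m + n) x y := by
  have hhg : h m = g 0 := hh.target.trans hg.source.symm
  refine ⟨hh.isPath.append hg.isPath, fun i j hij hj => ?_⟩
  rcases le_total j m with hjm | hmj
  · rw [appendPath_of_le hjm, appendPath_of_le (hij.trans hjm)]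
    have := hh.dist_add hij hjm
    omega
  obtain ⟨t, rfl⟩ := Nat.exists_eq_add_of_le hmj
  rw [appendPath_add hhg]
  rcases le_total i m with him | hmi
  · rw [appendPath_of_le him]
    have := hnear i him
    have := hd.triangle (h i) (g t) y
    have := hg.dist_target_add (i := t) (by omega)
    have := hd.triangle (h i) (g t) f
    have := hg.dist_source (i := t) (by omega)
    have := hh.dist_target_add him
    have := hd.comm f (g t)
    omega
  · obtain ⟨s, rfl⟩ := Nat.exists_eq_add_of_le hmi
    rw [appendPath_add hhg]
    have := hg.dist_add (i := s) (j := t) (by omega) (by omega)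
    omega

end IsQuasiGeodesicPath

-- Dropping a perpendicular from `y` to the opposite side cuts the triangle into two L-shaped
-- quasi-geodesics, each of which is close to the geodesic with the same endpoints.
lemma DetourInequality.thinTriangles (hd : IsGeodesicMetric d) (hK : DetourInequality d K) :
    ThinTriangles d (168 * K + 3) := by
  intro p q r l m n x y z hp hq hr i hi
  obtain ⟨k, hk : k ≤ _, hkmin⟩ := Set.exists_min_image (Set.Iic n) (fun k => d (r k) y)
    (Set.finite_Iic n) Set.nonempty_Iic
  obtain ⟨g, hg⟩ := hd.exists_geodesicPath (r k) y
  have hx := IsQuasiGeodesicPath.of_nearest hd ((hr.drop hk).reverse hd) hg fun i _ =>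
    hkmin _ (Set.mem_Iic.2 (by omega))
  have hz := IsQuasiGeodesicPath.of_nearest hd (hr.take hk) hg fun i hi =>
    hkmin i (hi.trans hk)
  obtain ⟨j, hj, hij⟩ := hx.exists_near_of_geodesic hd hK hp i hi
  rcases le_total j (n - k) with hjk | hkj
  · rw [appendPath_of_le hjk] at hij
    exact .inr ⟨_, by omega, hij.trans (by omega)⟩
  obtain ⟨t, rfl⟩ := Nat.exists_eq_add_of_le hkj
  rw [appendPath_add (by rw [Nat.sub_self, add_zero, hg.source])] at hij
  obtain ⟨s, -, hts⟩ := hz.near_geodesic hd (hq.reverse hd)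
    (hz.exists_near_of_geodesic hd hK (hq.reverse hd)) (k + t) (by omega)
  rw [appendPath_add hg.source.symm] at hts
  exact .inl ⟨m - s, m.sub_le s, by linarith [hd.triangle (p i) (g t) (q (m - s))]⟩

end Detour

section WordMetric

variable {φ : FreeGroup ι →* G}

lemma wnorm_one : wnorm (1 : FreeGroup ι) = 0 :=
  @FreeGroup.norm_one ι (Classical.decEq ι)

lemma wnorm_inv (w : FreeGroup ι) : wnorm w⁻¹ = wnorm w :=
  @FreeGroup.norm_inv_eq ι (Classical.decEq ι) w

lemma wnorm_mul_le (v w : FreeGroup ι) : wnorm (v * w) ≤ wnorm v + wnorm w :=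
  @FreeGroup.norm_mul_le ι (Classical.decEq ι) v w

lemma wnorm_mk_le (L : List (ι × Bool)) : wnorm (.mk L) ≤ L.length :=
  @FreeGroup.norm_mk_le ι L (Classical.decEq ι)

lemma exists_mk_eq (w : FreeGroup ι) : ∃ L, FreeGroup.mk L = w ∧ L.length = wnorm w :=
  ⟨_, @FreeGroup.mk_toWord ι (Classical.decEq ι) w, rfl⟩

lemma wlen_le_wnorm (w : FreeGroup ι) : wlen φ (φ w) ≤ wnorm w :=
  Nat.sInf_le ⟨w, rfl, rfl⟩

lemma exists_wnorm_eq_wlen (hφ : Surjective φ) (g : G) : ∃ w, φ w = g ∧ wnorm w = wlen φ g :=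
  let ⟨w, hw⟩ := hφ g
  let ⟨v, hv, hvg⟩ := Nat.sInf_mem (s := {n | ∃ w, wnorm w = n ∧ φ w = g}) ⟨_, w, rfl, hw⟩
  ⟨v, hvg, hv⟩

lemma wlen_one : wlen φ 1 = 0 := by
  simpa only [map_one, wnorm_one, Nat.le_zero] using wlen_le_wnorm (φ := φ) 1

lemma wlen_mul_le (hφ : Surjective φ) (g h : G) : wlen φ (g * h) ≤ wlen φ g + wlen φ h := by
  obtain ⟨v, rfl, hv⟩ := exists_wnorm_eq_wlen hφ g
  obtain ⟨w, rfl, hw⟩ := exists_wnorm_eq_wlen hφ h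
  rw [← map_mul, ← hv, ← hw]
  exact (wlen_le_wnorm _).trans (wnorm_mul_le v w)

lemma wlen_inv_le (hφ : Surjective φ) (g : G) : wlen φ g⁻¹ ≤ wlen φ g := by
  obtain ⟨w, rfl, hw⟩ := exists_wnorm_eq_wlen hφ g
  rw [← map_inv, ← hw, ← wnorm_inv]
  exact wlen_le_wnorm _

lemma wdist_mul_right_le (g : G) (w : FreeGroup ι) : wdist φ g (g * φ w) ≤ wnorm w := by
  rw [wdist, inv_mul_cancel_left]
  exact wlen_le_wnorm w

lemma isPath_take (L : List (ι × Bool)) (g : G) :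
    IsPath (wdist φ) (fun i => g * φ (.mk (L.take i))) L.length g (g * φ (.mk L)) where
  source := by rw [List.take_zero, ← FreeGroup.one_eq_mk, map_one, mul_one]
  target := by rw [List.take_length]
  step i hi := by
    rw [List.take_succ_eq_append_getElem hi, ← FreeGroup.mul_mk, map_mul, ← mul_assoc]
    exact (wdist_mul_right_le _ _).trans (wnorm_mk_le _)

lemma isGeodesicMetric_wdist (hφ : Surjective φ) : IsGeodesicMetric (wdist φ) where
  self g := by rw [wdist, inv_mul_cancel, wlen_one]
  comm := by
    have le : ∀ g h, wdist φ g h ≤ wdist φ h g := fun g h => by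
      simpa only [wdist, mul_inv_rev, inv_inv] using wlen_inv_le hφ (h⁻¹ * g)
    exact fun g h => (le g h).antisymm (le h g)
  triangle g h k := by
    simpa only [wdist, mul_assoc, mul_inv_cancel_left] using
      wlen_mul_le hφ (g⁻¹ * h) (h⁻¹ * k)
  exists_path g h := by
    obtain ⟨w, hw, hwlen⟩ := exists_wnorm_eq_wlen hφ (g⁻¹ * h)
    obtain ⟨L, rfl, hL⟩ := exists_mk_eq w
    have hpath := isPath_take (φ := φ) L g
    rw [hw, mul_inv_cancel_left, hL, hwlen] at hpath
    exact ⟨_, hpath⟩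

lemma IsGeodesicPath.isGeodesic {p : ℕ → G} {n : ℕ} {g h : G}
    (hp : IsGeodesicPath (wdist φ) p n g h) : IsGeodesic φ fun i : Fin (n + 1) => p i :=
  ⟨fun i => hp.isPath.step i i.isLt, hp.dist_add n.zero_le le_rfl⟩

lemma IsGeodesic.isGeodesicPath (hφ : Surjective φ) {n : ℕ} {p : Fin (n + 1) → G}
    (hp : IsGeodesic φ p) :
    IsGeodesicPath (wdist φ) (fun i => p (Fin.ofNat (n + 1) i)) n (p 0) (p (Fin.last n)) := by
  have ofNat_eq : ∀ {i} (hi : i < n + 1), Fin.ofNat (n + 1) i = ⟨i, hi⟩ := fun hi =>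
    Fin.ext (Nat.mod_eq_of_lt hi)
  refine IsPath.isGeodesicPath (isGeodesicMetric_wdist hφ)
    ⟨rfl, congrArg p (ofNat_eq n.lt_succ_self), fun i hi => ?_⟩ hp.2.ge
  rw [ofNat_eq (Nat.lt_succ_of_lt hi), ofNat_eq (Nat.succ_lt_succ hi)]
  exact hp.1 ⟨i, hi⟩

lemma ThinTriangles.isHyperbolic (hφ : Surjective φ) {δ : ℕ} (hδ : ThinTriangles (wdist φ) δ) :
    IsHyperbolic φ := by
  have first_side : ∀ {n₁ n₂ n₃ : ℕ} {p : Fin (n₁ + 1) → G} {q : Fin (n₂ + 1) → G}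
      {r : Fin (n₃ + 1) → G}, IsGeodesic φ p → IsGeodesic φ q → IsGeodesic φ r →
      p (Fin.last n₁) = q 0 → q (Fin.last n₂) = r 0 → r (Fin.last n₃) = p 0 →
      ThinAt φ δ p (Set.range q ∪ Set.range r) := by
    intro n₁ n₂ n₃ p q r hp hq hr hpq hqr hrp i
    have hp := hp.isGeodesicPath hφ
    have hq := hq.isGeodesicPath hφ
    have hr := hr.isGeodesicPath hφ
    rw [hpq] at hp
    rw [hqr] at hq
    rw [hrp] at hr
    have hi := hδ hp hq hr i i.is_le
    simp only [Fin.ofNat_eq_cast, Fin.cast_val_eq_self] at hi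
    rcases hi with ⟨j, -, hij⟩ | ⟨j, -, hij⟩
    · exact ⟨_, .inl ⟨_, rfl⟩, Nat.cast_le.2 hij⟩
    · exact ⟨_, .inr ⟨_, rfl⟩, Nat.cast_le.2 hij⟩
  exact ⟨δ, δ.cast_nonneg, fun _ _ _ _ _ _ hp hq hr hpq hqr hrp =>
    ⟨first_side hp hq hr hpq hqr hrp, first_side hq hr hp hqr hrp hpq,
      first_side hr hp hq hrp hpq hqr⟩⟩

lemma IsHyperbolic.exists_thinTriangles (h : IsHyperbolic φ) :
    ∃ δ, ThinTriangles (wdist φ) δ := by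
  obtain ⟨δ, -, hδ⟩ := h
  refine ⟨⌊δ⌋₊, fun p q r l m n x y z hp hq hr i hi => ?_⟩
  obtain ⟨_, ⟨j, rfl⟩ | ⟨j, rfl⟩, hij⟩ :=
    (hδ l m n _ _ _ hp.isGeodesic hq.isGeodesic hr.isGeodesic (hp.target.trans hq.source.symm)
      (hq.target.trans hr.source.symm) (hr.target.trans hp.source.symm)).1 ⟨i, by omega⟩
  · exact .inl ⟨j, j.is_le, Nat.le_floor hij⟩
  · exact .inr ⟨j, j.is_le, Nat.le_floor hij⟩

end WordMetric

section LineIntegral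

variable {φ : FreeGroup ι →* G} {ω : G → G → ℤ}

/-- The right action of words on `G × ℤ` in which a generator moves the first coordinate along an
edge of the Cayley graph and adds to the second one the value of `ω` on that edge. -/
def transport (φ : FreeGroup ι →* G) (ω : G → G → ℤ) :
    FreeGroup ι →* (Equiv.Perm (G × ℤ))ᵐᵒᵖ :=
  FreeGroup.lift fun i => .op (Equiv.prodShear (Equiv.mulRight (φ (.of i))) fun g =>
    Equiv.addRight (ω g (g * φ (.of i))))

/-- The integral of the one-form `ω` along the path in the Cayley graph that starts at `g` and is
labelled by `w`. It is well defined on the free group without any condition on `ω`, since inverse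
letters act by inverse permutations. -/
def lineIntegral (φ : FreeGroup ι →* G) (ω : G → G → ℤ) (w : FreeGroup ι) (g : G) : ℤ :=
  ((transport φ ω w).unop (g, 0)).2

lemma unop_transport_apply (w : FreeGroup ι) (g : G) (s : ℤ) :
    (transport φ ω w).unop (g, s) = (g * φ w, s + lineIntegral φ ω w g) := by
  simp only [lineIntegral]
  induction w generalizing g s with
  | C1 => simp
  | of i => simp [transport]
  | inv_of i ih =>
    have inv_apply : ∀ s, (transport φ ω (.of i)⁻¹).unop (g, s) =
        (g * φ (.of i)⁻¹,
          s - ((transport φ ω (.of i)).unop (g * φ (.of i)⁻¹, 0)).2) := fun s => by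
      rw [map_inv, MulOpposite.unop_inv, Equiv.Perm.inv_eq_iff_eq, ih, map_inv,
        inv_mul_cancel_right, sub_add_cancel]
    rw [inv_apply, inv_apply, zero_sub, sub_eq_add_neg]
  | mul v w hv hw =>
    simp only [map_mul, MulOpposite.unop_mul, Equiv.Perm.mul_apply]
    rw [hv, hw, hv g 0, hw (g * φ v) (0 + _), mul_assoc, zero_add, add_assoc]

lemma lineIntegral_one (g : G) : lineIntegral φ ω 1 g = 0 := by
  simp [lineIntegral]

lemma lineIntegral_mul (v w : FreeGroup ι) (g : G) :
    lineIntegral φ ω (v * w) g = lineIntegral φ ω v g + lineIntegral φ ω w (g * φ v) := by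
  rw [lineIntegral, map_mul, MulOpposite.unop_mul, Equiv.Perm.mul_apply, unop_transport_apply,
    unop_transport_apply, zero_add]

lemma lineIntegral_inv (w : FreeGroup ι) (g : G) :
    lineIntegral φ ω w⁻¹ g = -lineIntegral φ ω w (g * φ w⁻¹) := by
  have := lineIntegral_mul (φ := φ) (ω := ω) w⁻¹ w g
  rw [inv_mul_cancel, lineIntegral_one] at this
  linarith

lemma lineIntegral_of_wnorm_le_one (hω : ∀ g h, ω h g = -ω g h) {w : FreeGroup ι}
    (hw : wnorm w ≤ 1) (g : G) : lineIntegral φ ω w g = ω g (g * φ w) := by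
  have hof : ∀ i g, lineIntegral φ ω (.of i) g = ω g (g * φ (.of i)) := fun i g => by
    simp [lineIntegral, transport]
  obtain ⟨L, rfl, hL⟩ := exists_mk_eq w
  rcases L with _ | ⟨⟨i, b⟩, _ | ⟨a, L⟩⟩
  · rw [← FreeGroup.one_eq_mk, lineIntegral_one, map_one, mul_one]
    linarith [hω g g]
  · cases b with
    | true => exact hof i g
    | false =>
      rw [show FreeGroup.mk [(i, false)] = (FreeGroup.of i)⁻¹ from rfl, lineIntegral_inv, hof,
        map_inv, inv_mul_cancel_right, ← hω]
  · simp only [List.length_cons] at hL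
    omega

lemma IsPath.exists_lineIntegral_eq_sum (hφ : Surjective φ) (hω : ∀ g h, ω h g = -ω g h)
    {p : ℕ → G} {n : ℕ} {g h : G} (hp : IsPath (wdist φ) p n g h) :
    ∃ w, wnorm w ≤ n ∧ g * φ w = h ∧
      lineIntegral φ ω w g = ∑ i ∈ Finset.range n, ω (p i) (p (i + 1)) := by
  induction n generalizing h with
  | zero =>
    exact ⟨1, wnorm_one.le, by rw [map_one, mul_one, ← hp.source, hp.target], lineIntegral_one g⟩
  | succ n ih =>
    obtain ⟨v, hvn, hv, hvω⟩ := ih ⟨hp.source, rfl, fun i hi => hp.step i (by omega)⟩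
    obtain ⟨w, hw, hwlen⟩ := exists_wnorm_eq_wlen hφ ((p n)⁻¹ * h)
    have hwn : wnorm w ≤ 1 := hwlen.trans_le (hp.target ▸ hp.step n n.lt_succ_self)
    have hpw : p n * φ w = h := by rw [hw, mul_inv_cancel_left]
    refine ⟨v * w, (wnorm_mul_le v w).trans (by omega), by rw [map_mul, ← mul_assoc, hv, hpw], ?_⟩
    rw [lineIntegral_mul, hv, hvω, lineIntegral_of_wnorm_le_one hω hwn, hpw,
      Finset.sum_range_succ, hp.target]

lemma AreaLe.abs_lineIntegral_le {R : Set (FreeGroup ι)} {B : ℤ} (hker : ∀ r ∈ R, φ r = 1)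
    (hB : ∀ r ∈ R, ∀ g, |lineIntegral φ ω r g| ≤ B) {w : FreeGroup ι} {l : ℕ}
    (hw : AreaLe R w l) (g : G) : |lineIntegral φ ω w g| ≤ l * B := by
  have relator : ∀ r, r ∈ R ∨ r⁻¹ ∈ R → φ r = 1 ∧ ∀ g, |lineIntegral φ ω r g| ≤ B := by
    rintro r (hr | hr)
    · exact ⟨hker r hr, hB r hr⟩
    · have hφr : φ r = 1 := by rw [← inv_eq_one, ← map_inv, hker _ hr]
      refine ⟨hφr, fun g => ?_⟩
      have := hB _ hr g
      rwa [lineIntegral_inv, abs_neg, map_inv, hφr, inv_one, mul_one] at this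
  obtain ⟨L, rfl, hL, rfl⟩ := hw
  clear hB hker
  induction L with
  | nil => simp [lineIntegral_one]
  | cons c L ih =>
    obtain ⟨f, r⟩ := c
    obtain ⟨hφr, hr⟩ := relator r (hL (f, r) List.mem_cons_self)
    have hconj : lineIntegral φ ω (f⁻¹ * r * f) g = lineIntegral φ ω r (g * φ f⁻¹) := by
      rw [lineIntegral_mul, lineIntegral_mul, lineIntegral_inv, map_mul, hφr, mul_one]
      ring
    rw [List.map_cons, List.prod_cons, lineIntegral_mul, hconj]
    have hφc : φ (f⁻¹ * r * f) = 1 := by simp [hφr]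
    rw [hφc, mul_one, List.length_cons, Nat.cast_succ, add_one_mul, add_comm]
    exact (abs_add_le _ _).trans
      (add_le_add (ih fun p hp => hL p (List.mem_cons_of_mem _ hp)) (hr _))

end LineIntegral

section QuadraticDetour

variable {V : Type*} {d : V → V → ℕ} {p : ℕ → V} {x y z : V} {r n : ℕ} {v : V → ℤ}

/-- Twice the integral of the one-form `u dv` along the edge from `x` to `y`, by the trapezoidal
rule. -/
def trapezoid (u v : V → ℤ) (x y : V) : ℤ :=
  (u x + u y) * (v y - v x)

/-- The cone-shaped function of height `r` supported on the ball of radius `r` around `z`. The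
subtraction is meant to be truncated. -/
def cone (d : V → V → ℕ) (z : V) (r : ℕ) (x : V) : ℤ :=
  (r - d z x : ℕ)

lemma trapezoid_swap (u v : V → ℤ) (x y : V) : trapezoid u v y x = -trapezoid u v x y := by
  simp only [trapezoid]
  ring

lemma IsGeodesicMetric.abs_dist_sub_dist_le (hd : IsGeodesicMetric d) (x y z : V) :
    |(d x z : ℤ) - d x y| ≤ d y z := by
  have := hd.triangle x y z
  have := hd.triangle x z y
  have := hd.comm y z
  rw [abs_le]
  omega

lemma IsGeodesicMetric.abs_cone_sub_cone_le (hd : IsGeodesicMetric d) (z : V) (r : ℕ) (x y : V) :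
    |cone d z r y - cone d z r x| ≤ d x y := by
  have := hd.triangle z x y
  have := hd.triangle z y x
  have := hd.comm x y
  rw [abs_le, cone, cone]
  omega

lemma sum_trapezoid_cone_eq_zero (v : V → ℤ) (hpz : ∀ i ≤ n, r ≤ d z (p i)) :
    ∑ i ∈ Finset.range n, trapezoid (cone d z r) v (p i) (p (i + 1)) = 0 := by
  refine Finset.sum_eq_zero fun i hi => ?_
  have hin := Finset.mem_range.1 hi
  simp [trapezoid, cone, Nat.sub_eq_zero_of_le (hpz i hin.le),
    Nat.sub_eq_zero_of_le (hpz (i + 1) hin)]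

-- Along the geodesic `u` decreases from `r` to `0` in unit steps, so that twice the integral of
-- `u du` telescopes.
lemma IsGeodesicPath.sum_trapezoid_cone {ε : ℤ} (hp : IsGeodesicPath d p n z y) (hr : r ≤ n)
    (hv : ∀ i < n, v (p (i + 1)) - v (p i) = ε) :
    ∑ i ∈ Finset.range n, trapezoid (cone d z r) v (p i) (p (i + 1)) = ε * r ^ 2 := by
  have hcone : ∀ i ≤ n, cone d z r (p i) = (r - i : ℕ) := fun i hi => by
    rw [cone, hp.dist_source hi]
  have hterm : ∀ i ∈ Finset.range n, trapezoid (cone d z r) v (p i) (p (i + 1)) =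
      ε * (((r - i : ℕ) : ℤ) ^ 2 - ((r - (i + 1) : ℕ) : ℤ) ^ 2) := fun i hi => by
    have hin := Finset.mem_range.1 hi
    rw [trapezoid, hv i hin, hcone i hin.le, hcone (i + 1) hin]
    rcases Nat.lt_or_ge i r with hir | hri
    · obtain ⟨s, rfl⟩ := Nat.exists_eq_add_of_lt hir
      rw [show i + s + 1 - i = s + 1 by omega, show i + s + 1 - (i + 1) = s by omega]
      push_cast
      ring
    · simp [Nat.sub_eq_zero_of_le hri, Nat.sub_eq_zero_of_le (hri.trans i.le_succ)]
  rw [Finset.sum_congr rfl hterm, ← Finset.mul_sum,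
    Finset.sum_range_sub' fun i => ((r - i : ℕ) : ℤ) ^ 2, Nat.sub_zero, Nat.sub_eq_zero_of_le hr]
  ring

lemma IsGeodesicPath.sum_trapezoid_cone_dist_target (hd : IsGeodesicMetric d)
    (hp : IsGeodesicPath d p n z x) (hr : r ≤ n) :
    ∑ i ∈ Finset.range n, trapezoid (cone d z r) (fun w => (d x w : ℤ)) (p i) (p (i + 1)) =
      -r ^ 2 := by
  rw [← neg_one_mul]
  refine hp.sum_trapezoid_cone hr fun i hi => ?_
  have := hp.dist_target_add hi.le
  have := hp.dist_target_add (i := i + 1) hi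
  rw [hd.comm x, hd.comm x]
  omega

lemma IsGeodesicPath.sum_trapezoid_cone_dist (hd : IsGeodesicMetric d)
    (hp : IsGeodesicPath d p n z y) (hr : r ≤ n) (hz : d x z + d z y = d x y) :
    ∑ i ∈ Finset.range n, trapezoid (cone d z r) (fun w => (d x w : ℤ)) (p i) (p (i + 1)) =
      r ^ 2 := by
  have hxp : ∀ i ≤ n, d x (p i) = d x z + i := fun i hi => by
    have := hd.triangle x z (p i)
    have := hd.triangle x (p i) y
    have := hp.dist_source hi
    have := hp.dist_target_add hi
    have := hp.dist_eq
    omega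
  rw [← one_mul ((r : ℤ) ^ 2)]
  refine hp.sum_trapezoid_cone hr fun i hi => ?_
  rw [hxp i hi.le, hxp (i + 1) hi]
  omega

variable {φ : FreeGroup ι →* G}

lemma abs_lineIntegral_trapezoid_mk_sub_le {u v : G → ℤ}
    (hu : ∀ g h, |u h - u g| ≤ wdist φ g h) (hv : ∀ g h, |v h - v g| ≤ wdist φ g h)
    (L : List (ι × Bool)) (g : G) :
    |lineIntegral φ (trapezoid u v) (.mk L) g - 2 * u g * (v (g * φ (.mk L)) - v g)| ≤
      (L.length : ℤ) ^ 2 := by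
  induction L using List.reverseRecOn with
  | nil => simp [← FreeGroup.one_eq_mk, lineIntegral_one]
  | append_singleton L a ih =>
    set h := g * φ (.mk L)
    have hletter : wnorm (FreeGroup.mk [a]) ≤ 1 := wnorm_mk_le [a]
    obtain ⟨h', hh'⟩ : ∃ h', h * φ (.mk [a]) = h' := ⟨_, rfl⟩
    have hend : g * φ (.mk (L ++ [a])) = h' := by
      rw [← FreeGroup.mul_mk, map_mul, ← mul_assoc, hh']
    have hsplit : lineIntegral φ (trapezoid u v) (.mk (L ++ [a])) g =
        lineIntegral φ (trapezoid u v) (.mk L) g + (u h + u h') * (v h' - v h) := by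
      rw [← FreeGroup.mul_mk, lineIntegral_mul,
        lineIntegral_of_wnorm_le_one (trapezoid_swap u v) hletter, hh', trapezoid]
    have hgh : |u h - u g| ≤ L.length := (hu g h).trans <|
      Nat.cast_le.2 ((wdist_mul_right_le g _).trans (wnorm_mk_le L))
    have hhh' : (wdist φ h h' : ℤ) ≤ 1 := by
      rw [← hh']
      exact Nat.cast_le.2 ((wdist_mul_right_le h _).trans hletter)
    have hlast : |((u h - u g) + (u h - u g) + (u h' - u h)) * (v h' - v h)| ≤
        2 * L.length + 1 := by
      rw [abs_mul]
      refine (mul_le_of_le_one_right (abs_nonneg _) ((hv h h').trans hhh')).trans ?_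
      linarith [abs_add_three (u h - u g) (u h - u g) (u h' - u h), hu h h']
    rw [hsplit, hend, List.length_append, List.length_singleton]
    calc |lineIntegral φ (trapezoid u v) (.mk L) g + (u h + u h') * (v h' - v h) -
            2 * u g * (v h' - v g)|
        = |(lineIntegral φ (trapezoid u v) (.mk L) g - 2 * u g * (v h - v g)) +
            ((u h - u g) + (u h - u g) + (u h' - u h)) * (v h' - v h)| := by congr 1; ring
      _ ≤ (L.length : ℤ) ^ 2 + (2 * L.length + 1) :=
        (abs_add_le _ _).trans (add_le_add ih hlast)
      _ = ((L.length + 1 : ℕ) : ℤ) ^ 2 := by push_cast; ring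

lemma abs_lineIntegral_trapezoid_le {u v : G → ℤ} {ρ : ℕ}
    (hu : ∀ g h, |u h - u g| ≤ wdist φ g h) (hv : ∀ g h, |v h - v g| ≤ wdist φ g h)
    {w : FreeGroup ι} (hw : w ∈ triv φ ρ) (g : G) :
    |lineIntegral φ (trapezoid u v) w g| ≤ (ρ : ℤ) ^ 2 := by
  obtain ⟨L, rfl, hL⟩ := exists_mk_eq w
  have hbound := abs_lineIntegral_trapezoid_mk_sub_le hu hv L g
  rw [hw.2, mul_one, sub_self, mul_zero, sub_zero] at hbound
  exact hbound.trans (by have := hL.trans_le hw.1; gcongr)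

/-- Every word of length `n` representing the identity has area at most `K * (n + 1)` with respect
to the relators of length at most `ρ`. -/
def LinearIsoperimetric (φ : FreeGroup ι →* G) (ρ K : ℕ) : Prop :=
  ∀ ⦃w⦄, φ w = 1 → ∃ l ≤ K * (wnorm w + 1), AreaLe (triv φ ρ) w l

-- The form `u dv` with `u` the cone over the ball around `z` and `v` the distance to `x` vanishes
-- along the detour and integrates to `r ^ 2` along the geodesic through `z`.
lemma LinearIsoperimetric.detourInequality (hφ : Surjective φ) {ρ K : ℕ}
    (hK : LinearIsoperimetric φ ρ K) : DetourInequality (wdist φ) (K * ρ ^ 2) := by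
  rintro x y z r n hz ⟨τ, hτ, hτz⟩
  have hd := isGeodesicMetric_wdist hφ
  have hω := trapezoid_swap (cone (wdist φ) z r) fun g => (wdist φ x g : ℤ)
  obtain ⟨p, hp⟩ := hd.exists_geodesicPath z x
  obtain ⟨q, hq⟩ := hd.exists_geodesicPath z y
  obtain ⟨w₁, hw₁, hw₁x, hw₁ω⟩ := hp.isPath.exists_lineIntegral_eq_sum hφ hω
  obtain ⟨w₂, hw₂, hw₂y, hw₂ω⟩ := hq.isPath.exists_lineIntegral_eq_sum hφ hω
  obtain ⟨w, hw, hwy, hwω⟩ := hτ.exists_lineIntegral_eq_sum hφ hω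
  rw [hp.sum_trapezoid_cone_dist_target hd (by simpa only [hτ.source] using hτz 0 n.zero_le)]
    at hw₁ω
  rw [hq.sum_trapezoid_cone_dist hd (by simpa only [hτ.target] using hτz n le_rfl) hz] at hw₂ω
  rw [sum_trapezoid_cone_eq_zero _ hτz] at hwω
  have hloop : φ (w₁ * w * w₂⁻¹) = 1 := by
    rw [map_mul, map_mul, map_inv, mul_inv_eq_one, ← mul_right_inj z, hw₂y, ← mul_assoc, hw₁x, hwy]
  have hintegral : lineIntegral φ (trapezoid (cone (wdist φ) z r) fun g => (wdist φ x g : ℤ))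
      (w₁ * w * w₂⁻¹) z = -(2 * r ^ 2) := by
    rw [lineIntegral_mul, lineIntegral_mul, lineIntegral_inv, map_mul, ← mul_assoc, hw₁x, hwy,
      ← hw₂y, map_inv, mul_inv_cancel_right, hw₁ω, hw₂ω, hwω]
    ring
  have hlength : wnorm (w₁ * w * w₂⁻¹) ≤ 2 * n := by
    linarith [wnorm_mul_le (w₁ * w) w₂⁻¹, wnorm_mul_le w₁ w, wnorm_inv w₂, hτ.dist_le hd,
      hd.comm x z]
  obtain ⟨l, hl, harea⟩ := hK hloop
  have hr := harea.abs_lineIntegral_le (fun _ hs => hs.2) (fun _ hs =>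
    abs_lineIntegral_trapezoid_le (hd.abs_cone_sub_cone_le z r)
      (hd.abs_dist_sub_dist_le x) hs) z
  rw [hintegral, abs_neg, abs_of_nonneg (by positivity)] at hr
  have hr' : 2 * r ^ 2 ≤ l * ρ ^ 2 := by exact_mod_cast hr
  nlinarith [hr', Nat.mul_le_mul_right (ρ ^ 2) (hl.trans (Nat.mul_le_mul_left K
    (Nat.add_le_add_right hlength 1)))]

end QuadraticDetour

section Area

variable {R S : Set (FreeGroup ι)} {v w r : FreeGroup ι} {k l m n : ℕ} {φ : FreeGroup ι →* G}

namespace AreaLe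

lemma one (R : Set (FreeGroup ι)) : AreaLe R 1 0 :=
  ⟨[], rfl, by simp, by simp⟩

lemma mul (hv : AreaLe R v k) (hw : AreaLe R w l) : AreaLe R (v * w) (k + l) := by
  obtain ⟨L, rfl, hL, rfl⟩ := hv
  obtain ⟨M, rfl, hM, rfl⟩ := hw
  exact ⟨L ++ M, List.length_append, List.forall_mem_append.2 ⟨hL, hM⟩, by simp⟩

lemma conj (hr : r ∈ R ∨ r⁻¹ ∈ R) (f : FreeGroup ι) : AreaLe R (f⁻¹ * r * f) 1 :=
  ⟨[(f, r)], rfl, by simpa using hr, by simp⟩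

lemma of_mem (hr : r ∈ R) : AreaLe R r 1 := by
  simpa only [inv_one, one_mul, mul_one] using conj (.inl hr) 1

lemma inv (hw : AreaLe R w l) : AreaLe R w⁻¹ l := by
  obtain ⟨L, rfl, hL, rfl⟩ := hw
  induction L with
  | nil => simpa using one R
  | cons c L ih =>
    have hc : AreaLe R (c.1⁻¹ * c.2⁻¹ * c.1) 1 :=
      conj (by simpa only [inv_inv] using (hL c List.mem_cons_self).symm) _
    simpa only [List.map_cons, List.prod_cons, mul_inv_rev, inv_inv, mul_assoc,
      List.length_cons] using (ih fun p hp => hL p (List.mem_cons_of_mem _ hp)).mul hc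

lemma mono (hRS : R ⊆ S) (hw : AreaLe R w l) : AreaLe S w l :=
  hw.imp fun _ ⟨hl, hL, hprod⟩ => ⟨hl, fun p hp => (hL p hp).imp (@hRS _) (@hRS _), hprod⟩

end AreaLe

lemma areaLe_area (hw : w ∈ Subgroup.normalClosure R) : AreaLe R w (area R w) := by
  suffices hne : ∃ l, AreaLe R w l from Nat.sInf_mem (s := {l | AreaLe R w l}) hne
  induction hw using Subgroup.closure_induction with
  | mem w hw =>
    obtain ⟨r, hr, hrw⟩ := Group.mem_conjugatesOfSet_iff.1 hw
    obtain ⟨c, rfl⟩ := isConj_iff.1 hrw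
    exact ⟨1, by simpa only [inv_inv] using AreaLe.conj (.inl hr) c⁻¹⟩
  | one => exact ⟨0, .one R⟩
  | mul v w _ _ hv hw =>
    obtain ⟨k, hk⟩ := hv
    obtain ⟨l, hl⟩ := hw
    exact ⟨k + l, hk.mul hl⟩
  | inv w _ hw => exact hw.imp fun _ => AreaLe.inv

lemma triv_mono (φ : FreeGroup ι →* G) (hkm : k ≤ m) : triv φ k ⊆ triv φ m :=
  fun _ hw => ⟨hw.1.trans hkm, hw.2⟩

lemma map_eq_one_of_mem_normalClosure_triv (hw : w ∈ Subgroup.normalClosure (triv φ k)) :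
    φ w = 1 :=
  MonoidHom.mem_ker.1 <| Subgroup.normalClosure_le_normal (N := φ.ker) (fun _ hr => hr.2) hw

lemma finite_setOf_wnorm_le [Finite ι] (n : ℕ) : {w : FreeGroup ι | wnorm w ≤ n}.Finite := by
  refine ((List.finite_length_le (ι × Bool) n).image FreeGroup.mk).subset fun w hw => ?_
  obtain ⟨L, rfl, hL⟩ := exists_mk_eq w
  exact ⟨L, hL.trans_le hw, rfl⟩

lemma area_le_isoSpec [Finite ι] (m : ℕ) (hw : w ∈ Subgroup.normalClosure (triv φ k))
    (hn : wnorm w ≤ n) : area (triv φ m) w ≤ isoSpec φ k m n :=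
  le_csSup (((finite_setOf_wnorm_le n).subset fun _ hv => hv.2).image _).bddAbove
    (Set.mem_image_of_mem _ ⟨hw, hn⟩)

lemma isoSpec_le (h : ∀ w, φ w = 1 → wnorm w ≤ n → ∃ l' ≤ l, AreaLe (triv φ m) w l') :
    isoSpec φ k m n ≤ l := by
  refine csSup_le' (Set.forall_mem_image.2 fun w hw => ?_)
  obtain ⟨l', hl', harea⟩ := h w (map_eq_one_of_mem_normalClosure_triv hw.1) hw.2
  exact (Nat.sInf_le harea).trans hl'

end Area

section Dehn

variable {φ : FreeGroup ι →* G} {E m : ℕ}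

lemma FourPoint.exists_shortenable_subword (hφ : Surjective φ) (hE : FourPoint (wdist φ) E)
    (hm : 0 < m) (hEm : E ≤ m) {L : List (ι × Bool)} (hL : φ (.mk L) = 1)
    (hLm : 6 * m ≤ L.length) :
    ∃ A B C, L = A ++ B ++ C ∧ B.length ≤ 6 * m ∧ wlen φ (φ (.mk B)) + m < B.length := by
  have hpath := isPath_take (φ := φ) L 1
  rw [hL, mul_one] at hpath
  obtain ⟨i, j, hij, hjL, hji, hshort⟩ :=
    hE.exists_shortcut (isGeodesicMetric_wdist hφ) hm hEm hpath hLm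
  have hsplit : L.take j = L.take i ++ (L.drop i).take (j - i) := by
    rw [← List.take_add, Nat.add_sub_cancel' hij]
  refine ⟨L.take i, (L.drop i).take (j - i), L.drop j, ?_, ?_, ?_⟩
  · rw [← hsplit, List.take_append_drop]
  · exact (List.length_take_le _ _).trans (by omega)
  · rw [wdist, hsplit, ← FreeGroup.mul_mk, map_mul, one_mul, one_mul, inv_mul_cancel_left]
      at hshort
    rw [List.length_take, List.length_drop]
    omega

-- Dehn's algorithm: each shortcut costs one relator and saves more than `m` letters.
lemma FourPoint.exists_areaLe (hφ : Surjective φ) (hE : FourPoint (wdist φ) E) (hm : 0 < m)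
    (hEm : E ≤ m) (L : List (ι × Bool)) (hL : φ (.mk L) = 1) :
    ∃ l, AreaLe (triv φ (12 * m)) (.mk L) l ∧ l * m ≤ L.length + m := by
  induction hn : L.length using Nat.strong_induction_on generalizing L with
  | _ n ih =>
  subst hn
  rcases Nat.lt_or_ge L.length (6 * m) with hlt | hge
  · exact ⟨1, .of_mem ⟨(wnorm_mk_le L).trans (by omega), hL⟩, by omega⟩
  obtain ⟨A, B, C, rfl, hB, hshort⟩ := hE.exists_shortenable_subword hφ hm hEm hL hge
  obtain ⟨v, hvB, hv⟩ := exists_wnorm_eq_wlen hφ (φ (.mk B))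
  obtain ⟨V, rfl, hV⟩ := exists_mk_eq v
  have hlength : (A ++ V ++ C).length + m < (A ++ B ++ C).length := by
    simp only [List.length_append]
    omega
  have hAVC : φ (.mk (A ++ V ++ C)) = 1 := by
    rw [← hL]
    simp only [← FreeGroup.mul_mk, map_mul, hvB]
  obtain ⟨l, hl, hlm⟩ := ih _ (by omega) _ hAVC rfl
  have hrelator : FreeGroup.mk B * (FreeGroup.mk V)⁻¹ ∈ triv φ (12 * m) := by
    refine ⟨(wnorm_mul_le _ _).trans ?_, by rw [map_mul, map_inv, hvB, mul_inv_cancel]⟩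
    have := wnorm_mk_le B
    rw [wnorm_inv]
    omega
  have hfactor : FreeGroup.mk (A ++ B ++ C) = (FreeGroup.mk A)⁻¹⁻¹ *
      (FreeGroup.mk B * (FreeGroup.mk V)⁻¹) * (FreeGroup.mk A)⁻¹ * FreeGroup.mk (A ++ V ++ C) := by
    simp only [← FreeGroup.mul_mk]
    group
  refine ⟨1 + l, hfactor ▸ (AreaLe.conj (.inl hrelator) _).mul hl, ?_⟩
  linarith

-- The error term `C * n / m` in the definition of `≼` absorbs the whole spectrum.
lemma IsHyperbolic.specLE (hφ : Surjective φ) (h : IsHyperbolic φ) {f : ℕ → ℕ → ℕ → ℝ}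
    (hf : ∀ k m n, 0 ≤ f k m n) : SpecLE (isoSpecR φ) f := by
  obtain ⟨δ, hδ⟩ := h.exists_thinTriangles
  have hE := hδ.fourPoint (isGeodesicMetric_wdist hφ)
  set E := 6 * δ + 2
  refine ⟨12 + E, by omega, fun k m n hk hm _ hkm => ?_⟩
  have hEm : E ≤ m := by linarith [Nat.le_mul_of_pos_right (12 + E) hk]
  have hspec : isoSpec φ k ((12 + E) * m) n ≤ n / m + 1 := by
    refine isoSpec_le fun w hw hwn => ?_
    obtain ⟨L, rfl, hL⟩ := exists_mk_eq w
    obtain ⟨l, hl, hlm⟩ := hE.exists_areaLe hφ hm hEm L hw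
    refine ⟨l, ?_, hl.mono (triv_mono φ (Nat.mul_le_mul_right m (Nat.le_add_right 12 E)))⟩
    rw [← Nat.add_div_right n hm, Nat.le_div_iff_mul_le hm]
    omega
  have hC : (1 : ℝ) ≤ (12 + E : ℕ) := Nat.one_le_cast.2 (by omega)
  calc isoSpecR φ k ((12 + E) * m) n
    _ ≤ (n / m : ℕ) + 1 := (Nat.cast_le.2 hspec).trans_eq (Nat.cast_succ _)
    _ ≤ (n / m : ℝ) + 1 := by gcongr; exact Nat.cast_div_le
    _ ≤ (12 + E : ℕ) * (n / m : ℝ) + (12 + E : ℕ) := by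
      gcongr
      exact le_mul_of_one_le_left (by positivity) hC
    _ ≤ _ := by
      rw [mul_div_assoc]
      linarith [mul_nonneg (zero_le_one.trans hC) (hf ((12 + E) * k) m ((12 + E) * n))]

end Dehn

section LinearSpectrum

variable {φ : FreeGroup ι →* G} {α : ℕ → ℕ} {A : ℕ}

lemma isoSpec_le_one {k m n : ℕ} (hnm : n ≤ m) : isoSpec φ k m n ≤ 1 :=
  isoSpec_le fun _ hw hwn => ⟨1, le_rfl, .of_mem ⟨hwn.trans hnm, hw⟩⟩

lemma SpecLE.exists_forall_le_mul (h : SpecLE (fun _ m n => (α n : ℝ) / m) (isoSpecR φ)) :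
    ∃ A, ∀ n, 0 < n → α n ≤ A * n := by
  obtain ⟨C, hC, h⟩ := h
  refine ⟨(2 * C + 1) * C ^ 2, fun n hn => ?_⟩
  have hCn : (0 : ℝ) < (C * n : ℕ) := by positivity
  have hspec : isoSpecR φ (C * 1) (C * n) (C * n) ≤ 1 :=
    Nat.cast_le_one.2 (isoSpec_le_one le_rfl)
  have hα := h 1 (C * n) n one_pos (by positivity) hn (Nat.mul_le_mul_left C hn)
  dsimp only at hα
  rw [show (C : ℝ) * n / (C * n : ℕ) = 1 by rw [← Nat.cast_mul, div_self hCn.ne'],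
    div_le_iff₀ (by positivity)] at hα
  have hα' : (α n : ℝ) ≤ (C * 1 + 1 + C) * (C * (C * n) : ℕ) := hα.trans (by gcongr)
  have hα'' : α n ≤ (C * 1 + 1 + C) * (C * (C * n)) := by exact_mod_cast hα'
  linarith

lemma SpecLE.exists_isoSpec_le (h : SpecLE (isoSpecR φ) fun _ m n => (α n : ℝ) / m)
    (hα : ∀ n, 0 < n → α n ≤ A * n) {k : ℕ} (hk : 0 < k) :
    ∃ m K, k ≤ m ∧ ∀ n, 0 < n → isoSpec φ k m n ≤ K * n := by
  obtain ⟨C, hC, h⟩ := h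
  have hCk : 0 < C * k := Nat.mul_pos hC hk
  refine ⟨C * (C * k), C * (A * C) + 2 * C,
    (Nat.le_mul_of_pos_left k hC).trans (Nat.le_mul_of_pos_left _ hC), fun n hn => ?_⟩
  have hCk' : (1 : ℝ) ≤ (C * k : ℕ) := by exact_mod_cast hCk
  have hspec : isoSpecR φ k (C * (C * k)) n ≤ C * (A * (C * n) : ℕ) + C * n + C * n :=
    calc isoSpecR φ k (C * (C * k)) n
      _ ≤ C * (α (C * n) / (C * k : ℕ)) + C * n / (C * k : ℕ) + C := h k _ n hk hCk hn le_rfl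
      _ ≤ C * α (C * n) + C * n + C := by
        gcongr <;> exact div_le_self (by positivity) hCk'
      _ ≤ C * (A * (C * n) : ℕ) + C * n + C * n := by
        gcongr
        · exact hα _ (Nat.mul_pos hC hn)
        · exact le_mul_of_one_le_right (by positivity) (by exact_mod_cast hn)
  have hspec' : isoSpec φ k (C * (C * k)) n ≤ C * (A * (C * n)) + C * n + C * n := by
    rw [isoSpecR] at hspec
    exact_mod_cast hspec
  linarith

lemma exists_ker_le_normalClosure_triv
    (hFP : ∃ R : Set (FreeGroup ι), R.Finite ∧ φ.ker = Subgroup.normalClosure R) :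
    ∃ k, 0 < k ∧ φ.ker ≤ Subgroup.normalClosure (triv φ k) := by
  obtain ⟨R, hR, hker⟩ := hFP
  obtain ⟨b, hb⟩ := (hR.image wnorm).bddAbove
  refine ⟨b + 1, b.succ_pos, hker.trans_le (Subgroup.normalClosure_mono fun r hr => ⟨?_, ?_⟩)⟩
  · exact (hb (Set.mem_image_of_mem _ hr)).trans b.le_succ
  · exact MonoidHom.mem_ker.1 (hker ▸ Subgroup.subset_normalClosure hr)

lemma LinearIsoperimetric.of_isoSpec_le [Finite ι] {k m K : ℕ}
    (hker : φ.ker ≤ Subgroup.normalClosure (triv φ k)) (hkm : k ≤ m)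
    (hK : ∀ n, 0 < n → isoSpec φ k m n ≤ K * n) : LinearIsoperimetric φ m K := by
  intro w hw
  have hwk := hker (MonoidHom.mem_ker.2 hw)
  exact ⟨_, (area_le_isoSpec m hwk (Nat.le_succ _)).trans (hK _ (Nat.succ_pos _)),
    areaLe_area (Subgroup.normalClosure_mono (triv_mono φ hkm) hwk)⟩

lemma isHyperbolic_of_specEquiv [Finite ι] (hφ : Surjective φ)
    (hFP : ∃ R : Set (FreeGroup ι), R.Finite ∧ φ.ker = Subgroup.normalClosure R)
    (h : SpecEquiv (isoSpecR φ) fun _ m n => (α n : ℝ) / m) : IsHyperbolic φ := by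
  obtain ⟨A, hA⟩ := h.2.exists_forall_le_mul
  obtain ⟨k, hk, hker⟩ := exists_ker_le_normalClosure_triv hFP
  obtain ⟨m, K, hkm, hK⟩ := h.1.exists_isoSpec_le hA hk
  have hlinear := LinearIsoperimetric.of_isoSpec_le hker hkm hK
  exact ((hlinear.detourInequality hφ).thinTriangles (isGeodesicMetric_wdist hφ)).isHyperbolic hφ

end LinearSpectrum

theorem isoSpec_alpha_div_m_iff_hyperbolic_general {ι : Type*} [Finite ι] {G : Type*} [Group G]
    (φ : FreeGroup ι →* G) (hφ : Surjective φ)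
    (hFP : ∃ R : Set (FreeGroup ι), R.Finite ∧ φ.ker = Subgroup.normalClosure R) :
    (∃ α : ℕ → ℕ, SpecEquiv (isoSpecR φ) (fun _ m n => (α n : ℝ) / m)) ↔ IsHyperbolic φ := by
  constructor
  · rintro ⟨α, hα⟩
    exact isHyperbolic_of_specEquiv hφ hFP hα
  · intro h
    refine ⟨0, h.specLE hφ fun _ _ _ => by positivity, 1, one_pos, fun k m n _ _ _ _ => ?_⟩
    have : 0 ≤ isoSpecR φ (1 * k) m (1 * n) := Nat.cast_nonneg _
    simp only [Pi.zero_apply, Nat.cast_zero, zero_div]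
    positivity

/-- For a finitely presented group `G`, the isoperimetric spectrum is
equivalent to `α(n)/m` for some `α : ℕ → ℕ` iff `G` is hyperbolic. -/
theorem isoSpec_alpha_div_m_iff_hyperbolic {G : Type} [Group G] {a : ℕ}
    (φ : FreeGroup (Fin a) →* G) (hφ : Surjective φ)
    (hFP : ∃ R : Set (FreeGroup (Fin a)), R.Finite ∧ φ.ker = Subgroup.normalClosure R) :
    (∃ α : ℕ → ℕ, SpecEquiv (isoSpecR φ) (fun _ m n => (α n : ℝ) / m)) ↔
      IsHyperbolic φ :=
  isoSpec_alpha_div_m_iff_hyperbolic_general φ hφ hFP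

end IsoSpecPaper
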